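/- arXiv:1508.00992 — 2 statements merged into one kernel-verified Lean document; each statement's English description precedes it below -/
import Mathlib

section
/- Let D : I ⥤ Cat be a filtered diagram such that D_i is an acyclic category for every object i of I, and let C = colim_I D in Cat. Then every endomorphism in C is an identity morphism. -/
open CategoryTheory CategoryTheory.Limits

universe u

/-- A category is *acyclic* if every endomorphism is an identity and there are no
antiparallel morphisms between distinct objects (hence no inverses). -/
def IsAcyclicCat (C : Type u) [Category.{u} C] : Prop :=
  (∀ (x : C) (f : x ⟶ x), f = 𝟙 x) ∧
    ∀ x y : C, x ≠ y → ¬(Nonempty (x ⟶ y) ∧ Nonempty (y ⟶ x))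

namespace FilteredColimitCat

/-- The indiscrete category on a type, with hom-types in the same universe. -/
def indiscrete : Type u ⥤ Cat.{u, u} where
  obj A := Cat.of (ULiftHom.{u} (Codiscrete A))
  map f := (ULiftHom.down ⋙ Codiscrete.functorOfFun f ⋙ ULiftHom.up).toCatHom

/-- Taking objects is left adjoint to forming indiscrete categories. -/
def objectsIndiscreteAdj : Cat.objects.{u, u} ⊣ indiscrete.{u} :=
  Adjunction.mkOfHomEquiv
    { homEquiv _ _ :=
        { toFun f := (Codiscrete.functor (fun x ↦ f x) ⋙ ULiftHom.up).toCatHom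
          invFun F := ↾fun x ↦ (ULiftHom.objDown.{u, u} (F.toFunctor.obj x)).as
          left_inv _ := rfl
          right_inv _ := rfl }
      homEquiv_naturality_left_symm _ _ := rfl
      homEquiv_naturality_right _ _ := rfl }

instance : PreservesColimitsOfSize.{u, u} Cat.objects.{u, u} :=
  objectsIndiscreteAdj.leftAdjoint_preservesColimits

/-- Composable arrows in the image of a functor, with composable lifts, have composite in the
image. -/
lemma exists_mapArrow_eq_mk_comp {C E : Type*} [Category* C] [Category* E] (F : C ⥤ E)
    {x y z : E} {f : x ⟶ y} {f' : y ⟶ z} {g g' : Arrow C} (h : g.right = g'.left)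
    (hg : F.mapArrow.obj g = Arrow.mk f) (hg' : F.mapArrow.obj g' = Arrow.mk f') :
    ∃ g'' : Arrow C, F.mapArrow.obj g'' = Arrow.mk (f ≫ f') := by
  obtain ⟨a, b, g⟩ := g
  obtain ⟨b', d, g'⟩ := g'
  obtain rfl : b = b' := h
  cases hg
  cases hg'
  exact ⟨Arrow.mk (g ≫ g'), congrArg Arrow.mk (F.map_comp g g')⟩

/-- An arrow with equal endpoints in a category all of whose endomorphisms are identities is
an identity arrow. -/
lemma arrow_eq_mk_id {C : Type*} [Category* C] (hC : ∀ (x : C) (f : x ⟶ x), f = 𝟙 x)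
    (g : Arrow C) (h : g.left = g.right) : g = Arrow.mk (𝟙 g.left) := by
  obtain ⟨a, b, g⟩ := g
  obtain rfl : a = b := h
  exact congrArg Arrow.mk (hC a g)

/-- Lift a functor to a wide subcategory containing all morphisms in its image. -/
def wideLift {C E : Type*} [Category* C] [Category* E] (P : MorphismProperty E)
    [P.IsMultiplicative] (F : C ⥤ E) (hF : ∀ ⦃a b : C⦄ (g : a ⟶ b), P (F.map g)) :
    C ⥤ WideSubcategory P where
  obj a := ⟨F.obj a⟩
  map g := ⟨F.map g, hF g⟩
  map_id a := WideSubcategory.hom_ext _ (F.map_id a)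
  map_comp g g' := WideSubcategory.hom_ext _ (F.map_comp g g')

variable {I : Type u} [Category.{u} I] {D : I ⥤ Cat.{u, u}} {c : Cocone D}

lemma mapArrow_ι_map {i k : I} (u : i ⟶ k) (g : Arrow (D.obj i)) :
    (c.ι.app k).toFunctor.mapArrow.obj ((D.map u).toFunctor.mapArrow.obj g) =
      (c.ι.app i).toFunctor.mapArrow.obj g := by
  rw [← c.w u]
  rfl

variable (c) in
/-- The morphisms of the point of a cocone that come from some stage of the diagram. -/
def fromStage : MorphismProperty c.pt := fun _ _ f ↦
  ∃ (i : I) (g : Arrow (D.obj i)), (c.ι.app i).toFunctor.mapArrow.obj g = Arrow.mk f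

lemma exists_obj_eq (hc : IsColimit c) (x : c.pt) :
    ∃ (i : I) (a : D.obj i), (c.ι.app i).toFunctor.obj a = x :=
  Types.jointly_surjective_of_isColimit (isColimitOfPreserves Cat.objects hc) x

variable [IsFiltered I]

lemma exists_map_obj_eq (hc : IsColimit c) {i j : I} (a : D.obj i) (b : D.obj j)
    (h : (c.ι.app i).toFunctor.obj a = (c.ι.app j).toFunctor.obj b) :
    ∃ (k : I) (u : i ⟶ k) (v : j ⟶ k), (D.map u).toFunctor.obj a = (D.map v).toFunctor.obj b :=
  (Types.FilteredColimit.isColimit_eq_iff _ (isColimitOfPreserves Cat.objects hc)).1 h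

lemma exists_map_obj_eq_of_stage (hc : IsColimit c) {i : I} (a b : D.obj i)
    (h : (c.ι.app i).toFunctor.obj a = (c.ι.app i).toFunctor.obj b) :
    ∃ (k : I) (u : i ⟶ k), (D.map u).toFunctor.obj a = (D.map u).toFunctor.obj b :=
  (Types.FilteredColimit.isColimit_eq_iff' (isColimitOfPreserves Cat.objects hc) _ _).1 h

lemma fromStage_isMultiplicative (hc : IsColimit c) : (fromStage c).IsMultiplicative where
  id_mem x := by
    obtain ⟨i, a, rfl⟩ := exists_obj_eq hc x
    exact ⟨i, Arrow.mk (𝟙 a), congrArg Arrow.mk ((c.ι.app i).toFunctor.map_id a)⟩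
  comp_mem f f' := by
    rintro ⟨i, g, hg⟩ ⟨j, g', hg'⟩
    obtain ⟨k, u, v, h⟩ := exists_map_obj_eq hc g.right g'.left
      ((congrArg Comma.right hg).trans (congrArg Comma.left hg').symm)
    exact ⟨k, exists_mapArrow_eq_mk_comp _ (g := (D.map u).toFunctor.mapArrow.obj g)
      (g' := (D.map v).toFunctor.mapArrow.obj g') h
      ((mapArrow_ι_map u g).trans hg) ((mapArrow_ι_map v g').trans hg')⟩

/-- Every morphism of a filtered colimit of categories comes from some stage. -/
lemma fromStage_of_isColimit (hc : IsColimit c) {x y : c.pt} (f : x ⟶ y) : fromStage c f := by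
  have := fromStage_isMultiplicative hc
  have h (i : I) ⦃a b : D.obj i⦄ (g : a ⟶ b) : fromStage c ((c.ι.app i).toFunctor.map g) :=
    ⟨i, Arrow.mk g, rfl⟩
  let s : Cocone D :=
    { pt := Cat.of (WideSubcategory (fromStage c))
      ι :=
        { app i := (wideLift (fromStage c) (c.ι.app i).toFunctor (h i)).toCatHom
          naturality i j u := by
            have lift_congr {F : D.obj i ⟶ c.pt} (hF : ∀ ⦃a b⦄ (g : a ⟶ b),
                fromStage c (F.toFunctor.map g)) (e : F = c.ι.app i) :
                wideLift (fromStage c) F.toFunctor hF =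
                  wideLift (fromStage c) (c.ι.app i).toFunctor (h i) := by
              subst e
              rfl
            exact Cat.ext (lift_congr (fun _ _ _ ↦ h j _) (c.w u)) } }
  let p : s.pt ⟶ c.pt := (wideSubcategoryInclusion (fromStage c)).toCatHom
  have hp : hc.desc s ≫ p = 𝟙 c.pt := hc.hom_ext fun i ↦ by
    rw [hc.fac_assoc, Category.comp_id]
    rfl
  have hf : Arrow.mk ((hc.desc s).toFunctor.map f).hom = Arrow.mk f :=
    congrArg (fun F : c.pt ⟶ c.pt ↦ F.toFunctor.mapArrow.obj (Arrow.mk f)) hp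
  obtain ⟨i, g, hg⟩ := ((hc.desc s).toFunctor.map f).property
  exact ⟨i, g, hg.trans hf⟩

end FilteredColimitCat

open FilteredColimitCat in
/-- if `D : I ⥤ Cat` is a filtered diagram of acyclic categories and
`C = colim_I D` in `Cat`, then every endomorphism in `C` is an identity. -/
theorem filteredColimit_of_acyclic_endo_eq_id
    (I : Type u) [Category.{u} I] [IsFiltered I] (D : I ⥤ Cat.{u, u})
    (hD : ∀ i : I, IsAcyclicCat (D.obj i))
    (c : Cocone D) (hc : IsColimit c) :
    ∀ (x : c.pt) (f : x ⟶ x), f = 𝟙 x := by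
  intro x f
  obtain ⟨i, g, hg⟩ := fromStage_of_isColimit hc f
  obtain ⟨k, u, h⟩ := exists_map_obj_eq_of_stage hc g.left g.right
    ((congrArg Comma.left hg).trans (congrArg Comma.right hg).symm)
  have hid := arrow_eq_mk_id (hD k).1 ((D.map u).toFunctor.mapArrow.obj g) h
  rw [← mapArrow_ι_map u g, hid] at hg
  generalize ((D.map u).toFunctor.mapArrow.obj g).left = a at hg
  obtain rfl : (c.ι.app k).toFunctor.obj a = x := congrArg Comma.left hg
  exact ((Arrow.mk_inj _ _).1 hg).symm.trans ((c.ι.app k).toFunctor.map_id a)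
end

section
/- Let D : I ⥤ Cat be a filtered diagram such that D_i is an acyclic category for every object i of I, and let C = colim_I D in Cat. Then C has no antiparallel morphisms between distinct objects: if x ≠ y are objects of C, then C(x,y) and C(y,x) are not both nonempty. -/
open CategoryTheory CategoryTheory.Limits

universe u

/-- For a category `C` and a type `A`, functions from the objects of `C` to `A` are the same as
functors from `C` to the codiscrete category on `A` with morphisms lifted to the universe `u`. -/
def CategoryTheory.Cat.objectsHomEquivLiftedCodiscrete (C : Cat.{u, u}) (A : Type u) :
    (Cat.objects.obj C ⟶ A) ≃ (C ⟶ Cat.of (ULiftHom.{u} (Codiscrete A))) where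
  toFun f := Functor.toCatHom
    { obj := fun x => ULiftHom.objUp (Codiscrete.mk (f x))
      map := fun _ => ULift.up ⟨⟩ }
  invFun F := ↾fun x => (ULiftHom.objDown.{u, u} (F.toFunctor.obj x)).as
  left_inv _ := rfl
  right_inv _ := rfl

instance CategoryTheory.Cat.objects_isLeftAdjoint : Cat.objects.{u, u}.IsLeftAdjoint :=
  (Adjunction.adjunctionOfEquivRight Cat.objectsHomEquivLiftedCodiscrete
    fun _ _ _ _ _ => rfl).isLeftAdjoint

namespace CategoryTheory.Limits.CatFilteredColimit

variable {I : Type u} [Category.{u} I] {D : I ⥤ Cat.{u, u}} {c : Cocone D}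

/-- A cocone leg is compatible with the transition functors on objects. -/
lemma ι_obj_map_obj (c : Cocone D) {i j : I} (f : i ⟶ j) (a : D.obj i) :
    (c.ι.app j).toFunctor.obj ((D.map f).toFunctor.obj a) = (c.ι.app i).toFunctor.obj a :=
  Functor.congr_obj (congrArg Cat.Hom.toFunctor (c.w f)) a

/-- Every object of a colimit of categories comes from the diagram. -/
lemma exists_ι_obj_eq (hc : IsColimit c) (x : c.pt) :
    ∃ (i : I) (a : D.obj i), (c.ι.app i).toFunctor.obj a = x :=
  Types.jointly_surjective_of_isColimit (isColimitOfPreserves Cat.objects.{u, u} hc) x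

/-- Two objects are identified in a filtered colimit of categories exactly when they are identified
at some stage. -/
lemma ι_obj_eq_iff [IsFiltered I] (hc : IsColimit c) {i j : I} {a : D.obj i} {b : D.obj j} :
    (c.ι.app i).toFunctor.obj a = (c.ι.app j).toFunctor.obj b ↔
      ∃ (k : I) (f : i ⟶ k) (g : j ⟶ k),
        (D.map f).toFunctor.obj a = (D.map g).toFunctor.obj b :=
  Types.FilteredColimit.isColimit_eq_iff (D ⋙ Cat.objects)
    (isColimitOfPreserves Cat.objects.{u, u} hc)

/-- Two objects of the same stage are identified in a filtered colimit of categories exactly when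
they are identified by some transition functor. -/
lemma ι_obj_eq_iff' [IsFiltered I] (hc : IsColimit c) {i : I} {a b : D.obj i} :
    (c.ι.app i).toFunctor.obj a = (c.ι.app i).toFunctor.obj b ↔
      ∃ (k : I) (f : i ⟶ k), (D.map f).toFunctor.obj a = (D.map f).toFunctor.obj b :=
  Types.FilteredColimit.isColimit_eq_iff' (F := D ⋙ Cat.objects)
    (isColimitOfPreserves Cat.objects.{u, u} hc) a b

/-- The relation on the objects of a cocone point generated by the morphisms of the diagram. -/
def StageHom (c : Cocone D) (x y : c.pt) : Prop :=
  ∃ (i : I) (a b : D.obj i), Nonempty (a ⟶ b) ∧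
    (c.ι.app i).toFunctor.obj a = x ∧ (c.ι.app i).toFunctor.obj b = y

lemma StageHom.refl (hc : IsColimit c) (x : c.pt) : StageHom c x x := by
  obtain ⟨i, a, rfl⟩ := exists_ι_obj_eq hc x
  exact ⟨i, a, a, ⟨𝟙 a⟩, rfl, rfl⟩

/-- Composable stage morphisms can be made composable at a common stage. -/
lemma StageHom.exists_comp [IsFiltered I] (hc : IsColimit c) {x y z : c.pt}
    (hxy : StageHom c x y) (hyz : StageHom c y z) :
    ∃ (k : I) (p q r : D.obj k), Nonempty (p ⟶ q) ∧ Nonempty (q ⟶ r) ∧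
      (c.ι.app k).toFunctor.obj p = x ∧ (c.ι.app k).toFunctor.obj q = y ∧
      (c.ι.app k).toFunctor.obj r = z := by
  obtain ⟨i, a, b, ⟨φ⟩, rfl, rfl⟩ := hxy
  obtain ⟨j, b', d, ⟨ψ⟩, hb, rfl⟩ := hyz
  obtain ⟨k, f, g, h⟩ := (ι_obj_eq_iff hc).1 hb.symm
  exact ⟨k, (D.map f).toFunctor.obj a, (D.map f).toFunctor.obj b, (D.map g).toFunctor.obj d,
    ⟨(D.map f).toFunctor.map φ⟩, ⟨eqToHom h ≫ (D.map g).toFunctor.map ψ⟩,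
    ι_obj_map_obj c f a, ι_obj_map_obj c f b, ι_obj_map_obj c g d⟩

lemma StageHom.trans [IsFiltered I] (hc : IsColimit c) {x y z : c.pt}
    (hxy : StageHom c x y) (hyz : StageHom c y z) : StageHom c x z := by
  obtain ⟨k, p, q, r, ⟨φ⟩, ⟨ψ⟩, hp, -, hr⟩ := hxy.exists_comp hc hyz
  exact ⟨k, p, r, ⟨φ ≫ ψ⟩, hp, hr⟩

lemma StageHom.antisymm [IsFiltered I] (hD : ∀ i : I, IsAcyclicCat (D.obj i))
    (hc : IsColimit c) {x y : c.pt} (hxy : StageHom c x y) (hyx : StageHom c y x) : x = y := by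
  obtain ⟨k, p, q, r, ⟨φ⟩, ⟨ψ⟩, rfl, rfl, hr⟩ := hxy.exists_comp hc hyx
  obtain ⟨l, f, h⟩ := (ι_obj_eq_iff' hc).1 hr
  have hpq : (D.map f).toFunctor.obj p = (D.map f).toFunctor.obj q := by
    by_contra hne
    exact (hD l).2 _ _ hne
      ⟨⟨(D.map f).toFunctor.map φ⟩, ⟨(D.map f).toFunctor.map ψ ≫ eqToHom h⟩⟩
  exact (ι_obj_eq_iff' hc).2 ⟨l, f, hpq⟩

/-- The objects of a filtered colimit of categories, to be preordered by `StageHom`. -/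
structure StageOrder (_ : IsColimit c) where
  /-- The underlying object of the colimit. -/
  obj : c.pt

instance [IsFiltered I] (hc : IsColimit c) : Preorder (StageOrder hc) where
  le x y := StageHom c x.obj y.obj
  le_refl x := StageHom.refl hc x.obj
  le_trans _ _ _ := StageHom.trans hc

/-- The cocone over `D` whose point is the preorder of objects of the colimit of `D`. -/
def stageOrderCocone [IsFiltered I] (hc : IsColimit c) : Cocone D where
  pt := Cat.of (StageOrder hc)
  ι :=
    { app := fun i => Functor.toCatHom
        { obj := fun a => StageOrder.mk ((c.ι.app i).toFunctor.obj a)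
          map := fun {a b} φ => homOfLE ⟨i, a, b, ⟨φ⟩, rfl, rfl⟩ }
      naturality := fun _ _ f => Cat.Hom.ext <| Functor.ext
        (fun a => congrArg StageOrder.mk (ι_obj_map_obj c f a))
        (fun _ _ _ => (Preorder.subsingleton_hom (α := StageOrder hc) _ _).elim _ _) }

/-- The objects underlying a morphism of a filtered colimit of categories are also joined by a
morphism coming from some stage. -/
lemma stageHom_of_hom [IsFiltered I] (hc : IsColimit c) {x y : c.pt} (φ : x ⟶ y) :
    StageHom c x y := by
  let F : c.pt ⥤ StageOrder hc := (hc.desc (stageOrderCocone hc)).toFunctor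
  have hF (z : c.pt) : (F.obj z).obj = z := by
    obtain ⟨i, a, rfl⟩ := exists_ι_obj_eq hc z
    exact congrArg StageOrder.obj
      (Functor.congr_obj (congrArg Cat.Hom.toFunctor (hc.fac (stageOrderCocone hc) i)) a)
  have h : StageHom c (F.obj x).obj (F.obj y).obj := leOfHom (F.map φ)
  rwa [hF, hF] at h

end CategoryTheory.Limits.CatFilteredColimit

open CategoryTheory.Limits.CatFilteredColimit in
/-- if `D : I ⥤ Cat` is a filtered diagram of acyclic categories and
`C = colim_I D` in `Cat`, then `C` has no antiparallel morphisms between distinct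
objects: for `x ≠ y`, the hom-sets `C(x,y)` and `C(y,x)` are not both nonempty. -/
theorem filteredColimit_of_acyclic_no_antiparallel
    (I : Type u) [Category.{u} I] [IsFiltered I] (D : I ⥤ Cat.{u, u})
    (hD : ∀ i : I, IsAcyclicCat (D.obj i))
    (c : Cocone D) (hc : IsColimit c) :
    ∀ x y : c.pt, x ≠ y → ¬(Nonempty (x ⟶ y) ∧ Nonempty (y ⟶ x)) := by
  rintro x y hxy ⟨⟨φ⟩, ⟨ψ⟩⟩
  exact hxy ((stageHom_of_hom hc φ).antisymm hD hc (stageHom_of_hom hc ψ))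
end
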